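/- Let K be a finite abstract simplicial complex with more than one vertex. If no vertex of K is dominated by another vertex, then scat(K) ≥ 1, i.e., K itself is not a categorical subcomplex of K. -/

import Mathlib

/-- A finite abstract simplicial complex on a (finite) vertex type `V`:
a collection of nonempty finite subsets closed under taking nonempty subsets. -/
structure SComplex (V : Type*) where
  faces : Set (Finset V)
  nonempty_of_mem : ∀ σ ∈ faces, σ.Nonempty
  down_closed : ∀ σ ∈ faces, ∀ τ, τ ⊆ σ → τ.Nonempty → τ ∈ faces

namespace SComplex

variable {V : Type*} [DecidableEq V] [Fintype V]

/-- The vertices of a simplicial complex. -/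
def vertices (K : SComplex V) : Set V := {v | ({v} : Finset V) ∈ K.faces}

/-- A facet: a simplex not properly contained in any other simplex. -/
def IsMaximalFace (K : SComplex V) (σ : Finset V) : Prop :=
  σ ∈ K.faces ∧ ∀ τ ∈ K.faces, σ ⊆ τ → σ = τ

/-- The vertex `v` is dominated by the vertex `v' ≠ v`: every maximal simplex
containing `v` also contains `v'`. -/
def IsDominated (K : SComplex V) (v v' : V) : Prop :=
  v' ≠ v ∧ ({v} : Finset V) ∈ K.faces ∧ ({v'} : Finset V) ∈ K.faces ∧
    ∀ σ, K.IsMaximalFace σ → v ∈ σ → v' ∈ σ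

/-- An elementary strong collapse: removal of the open star of a dominated vertex. -/
def ElemStrongCollapse (K L : SComplex V) : Prop :=
  ∃ v v', K.IsDominated v v' ∧ L.faces = {σ ∈ K.faces | v ∉ σ}

/-- A strong collapse: a finite sequence of elementary strong collapses. -/
def StrongCollapsesTo (K L : SComplex V) : Prop :=
  Relation.ReflTransGen ElemStrongCollapse K L

/-- A vertex map `φ : V → V` is a simplicial map from `K` to `L`. -/
def IsSimplicialMap (K L : SComplex V) (φ : V → V) : Prop :=
  ∀ σ ∈ K.faces, σ.image φ ∈ L.faces

/-- Two simplicial maps `φ ψ : K → L` are contiguous: for each simplex `σ` of `K`,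
`φ(σ) ∪ ψ(σ)` is a simplex of `L`. -/
def Contiguous (K L : SComplex V) (φ ψ : V → V) : Prop :=
  IsSimplicialMap K L φ ∧ IsSimplicialMap K L ψ ∧
    ∀ σ ∈ K.faces, σ.image φ ∪ σ.image ψ ∈ L.faces

/-- `φ` and `ψ` lie in the same contiguity class: they are joined by a finite
chain of pairwise contiguous simplicial maps. -/
def SameContiguityClass (K L : SComplex V) (φ ψ : V → V) : Prop :=
  Relation.ReflTransGen (Contiguous K L) φ ψ

/-- A subcomplex `U ⊆ K` is categorical in `K`: there is a vertex `v` of `K` such that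
the inclusion `U → K` and the constant map `c_v : U → K` lie in the same contiguity class. -/
def IsCategoricalIn (U K : SComplex V) : Prop :=
  U.faces ⊆ K.faces ∧ ∃ v, ({v} : Finset V) ∈ K.faces ∧
    SameContiguityClass U K id (fun _ => v)

/-- The (non-normalized) simplicial Lusternik–Schnirelmann category of `K`:
the least `m` such that `K` can be covered by `m + 1` categorical subcomplexes. -/
noncomputable def scat (K : SComplex V) : ℕ :=
  sInf {m : ℕ | ∃ U : Fin (m + 1) → SComplex V,
    (∀ i, (U i).IsCategoricalIn K) ∧ ∀ σ ∈ K.faces, ∃ i, σ ∈ (U i).faces}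

/-- A discrete Morse function on `K` in the sense of Forman. -/
def IsDiscreteMorse (K : SComplex V) (f : Finset V → ℝ) : Prop :=
  ∀ σ ∈ K.faces,
    {τ | τ ∈ K.faces ∧ σ ⊂ τ ∧ τ.card = σ.card + 1 ∧ f τ ≤ f σ}.Subsingleton ∧
    {υ | υ ∈ K.faces ∧ υ ⊂ σ ∧ υ.card + 1 = σ.card ∧ f σ ≤ f υ}.Subsingleton

/-- A critical simplex of `f` (in the sense of Forman). -/
def IsCriticalSimplex (K : SComplex V) (f : Finset V → ℝ) (σ : Finset V) : Prop :=
  σ ∈ K.faces ∧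
    {τ | τ ∈ K.faces ∧ σ ⊂ τ ∧ τ.card = σ.card + 1 ∧ f τ ≤ f σ} = ∅ ∧
    {υ | υ ∈ K.faces ∧ υ ⊂ σ ∧ υ.card + 1 = σ.card ∧ f σ ≤ f υ} = ∅

/-- The induced gradient vector field
`V_f = {(σ⁽ᵖ⁾, τ⁽ᵖ⁺¹⁾) : σ < τ, f σ ≥ f τ}`. -/
def gradientVectorField (K : SComplex V) (f : Finset V → ℝ) : Set (Finset V × Finset V) :=
  {p | p.1 ∈ K.faces ∧ p.2 ∈ K.faces ∧ p.1 ⊂ p.2 ∧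
    p.2.card = p.1.card + 1 ∧ f p.2 ≤ f p.1}

/-- The level subcomplex `K(c)`: all simplices `τ` with `f τ ≤ c` together with
all of their faces. -/
def levelSubcomplex (K : SComplex V) (f : Finset V → ℝ) (c : ℝ) : SComplex V where
  faces := {σ | σ ∈ K.faces ∧ ∃ τ ∈ K.faces, σ ⊆ τ ∧ f τ ≤ c}
  nonempty_of_mem σ hσ := K.nonempty_of_mem σ hσ.1
  down_closed σ hσ τ hτσ hτ :=
    ⟨K.down_closed σ hσ.1 τ hτσ hτ,
      let ⟨ρ, hρK, hσρ, hρc⟩ := hσ.2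
      ⟨ρ, hρK, hτσ.trans hσρ, hρc⟩⟩

/-- `St(v,u) = st°(v) ∩ st(u)`: the simplices of the open star of `v`
that lie in the star of `u`. -/
def St (K : SComplex V) (v u : V) : Set (Finset V) :=
  {σ | σ ∈ K.faces ∧ v ∈ σ ∧ insert u σ ∈ K.faces}

/-- `m_v = min {f τ : f τ > f(uv), τ ∈ (K − St(v,u)) ∪ (Crit(f) ∩ St(v,u))}`. -/
noncomputable def mVal (K : SComplex V) (f : Finset V → ℝ) (v u : V) : ℝ :=
  sInf {y | ∃ τ ∈ K.faces, f τ = y ∧ f ({u, v} : Finset V) < y ∧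
    (τ ∉ K.St v u ∨ IsCriticalSimplex K f τ)}

/-- A regular value of `f`: an output value of `f` that is not a critical value. -/
def IsRegularValue (K : SComplex V) (f : Finset V → ℝ) (c : ℝ) : Prop :=
  (∃ σ ∈ K.faces, f σ = c) ∧ ∀ σ, IsCriticalSimplex K f σ → f σ ≠ c

/-- The candidates for `l_v`: regular values `c ∈ f(St(v,u))` with
`f(uv) ≤ c ≤ m_v` such that every maximal regular simplex of
`K(c) ∩ St(v,u)` contains the vertex `u`. -/
def lCandidates (K : SComplex V) (f : Finset V → ℝ) (v u : V) : Set ℝ :=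
  {c | (∃ σ ∈ K.St v u, f σ = c) ∧ IsRegularValue K f c ∧
    f ({u, v} : Finset V) ≤ c ∧ c ≤ mVal K f v u ∧
    ∀ σ ∈ (levelSubcomplex K f c).faces ∩ K.St v u,
      ¬ IsCriticalSimplex K f σ →
      (∀ τ ∈ (levelSubcomplex K f c).faces ∩ K.St v u,
        ¬ IsCriticalSimplex K f τ → σ ⊆ τ → σ = τ) → u ∈ σ}

/-- `l_v`: the largest element of `lCandidates`. -/
noncomputable def lVal (K : SComplex V) (f : Finset V → ℝ) (v u : V) : ℝ :=
  sSup (lCandidates K f v u)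

/-- The strong collapse of `v` under `f`:
`S^f_v = {(σ,τ) ∈ V_f : f(uv) ≤ f τ ≤ l_v}`. -/
def strongCollapseOf (K : SComplex V) (f : Finset V → ℝ) (v u : V) :
    Set (Finset V × Finset V) :=
  {p | p ∈ gradientVectorField K f ∧
    f ({u, v} : Finset V) ≤ f p.2 ∧ f p.2 ≤ lVal K f v u}

/-- The critical pairs of `f`: the elements of `V_f − ⋃ S^f_v`, the union being taken
over all vertex/edge pairs `(v, uv) ∈ V_f`. -/
def criticalPairs (K : SComplex V) (f : Finset V → ℝ) : Set (Finset V × Finset V) :=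
  gradientVectorField K f \
    ⋃ (v : V) (u : V)
      (_ : (({v} : Finset V), ({u, v} : Finset V)) ∈ gradientVectorField K f),
      strongCollapseOf K f v u

/-- The set of critical objects of `f`: critical simplices together with critical pairs. -/
def scrit (K : SComplex V) (f : Finset V → ℝ) :
    Set (Finset V ⊕ Finset V × Finset V) :=
  (Sum.inl '' {σ | IsCriticalSimplex K f σ}) ∪ (Sum.inr '' criticalPairs K f)

/-- The strong critical values of `f`: the values of `f` on critical objects. -/
def strongCriticalValues (K : SComplex V) (f : Finset V → ℝ) : Set ℝ :=
  {c | (∃ σ, IsCriticalSimplex K f σ ∧ f σ = c) ∨ ∃ p ∈ criticalPairs K f, f p.2 = c}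

/-- The critical objects of `f` whose underlying simplices lie in the subcomplex `L`. -/
def scritIn (K : SComplex V) (f : Finset V → ℝ) (L : SComplex V) :
    Set (Finset V ⊕ Finset V × Finset V) :=
  {o ∈ scrit K f | Sum.elim (· ∈ L.faces)
    (fun p => p.1 ∈ L.faces ∧ p.2 ∈ L.faces) o}

end SComplex

namespace SComplex

variable {V : Type*} [DecidableEq V]

/-- If no vertex of `K` is dominated, a map contiguous to one that fixes every vertex of `K`
also fixes every vertex of `K`. -/
theorem Contiguous.eqOn_id {K : SComplex V} (hd : ∀ v v' : V, ¬ K.IsDominated v v')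
    {φ ψ : V → V} (h : Contiguous K K φ ψ) (hφ : Set.EqOn φ id K.vertices) :
    Set.EqOn ψ id K.vertices := by
  intro v hv
  by_contra hne
  refine hd v (ψ v) ⟨hne, hv, ?_, fun σ hσ hvσ => ?_⟩
  · simpa using h.2.1 {v} hv
  · have himage : σ.image φ = σ := by
      have hfix : ∀ w ∈ σ, φ w = id w := fun w hw =>
        hφ (K.down_closed σ hσ.1 {w} (by simpa using hw) (Finset.singleton_nonempty w))
      rw [Finset.image_congr hfix, Finset.image_id]
    have hunion := h.2.2 σ hσ.1
    rw [himage] at hunion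
    rw [hσ.2 _ hunion Finset.subset_union_left]
    exact Finset.mem_union_right _ (Finset.mem_image_of_mem ψ hvσ)

/-- If no vertex of `K` is dominated, every map in the contiguity class of the identity
fixes every vertex of `K`. -/
theorem SameContiguityClass.eqOn_id {K : SComplex V} (hd : ∀ v v' : V, ¬ K.IsDominated v v')
    {ψ : V → V} (h : SameContiguityClass K K id ψ) : Set.EqOn ψ id K.vertices := by
  induction h with
  | refl => exact fun _ _ => rfl
  | tail _ hc ih => exact hc.eqOn_id hd ih

theorem not_isCategoricalIn_self [Finite V] {K : SComplex V} (hK : 1 < K.vertices.ncard)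
    (hd : ∀ v v' : V, ¬ K.IsDominated v v') : ¬ K.IsCategoricalIn K := by
  rintro ⟨-, v, -, hv⟩
  obtain ⟨a, b, ha, hb, hab⟩ := (Set.one_lt_ncard_iff).1 hK
  have hfix := hv.eqOn_id hd
  exact hab ((hfix ha).symm.trans (hfix hb))

/-- The subcomplex of `K` of all nonempty subsets of `σ`, which has no simplices
when `σ` is not a simplex of `K`. -/
def closedSimplex (K : SComplex V) (σ : Finset V) : SComplex V where
  faces := {τ | σ ∈ K.faces ∧ τ ⊆ σ ∧ τ.Nonempty}
  nonempty_of_mem _ hτ := hτ.2.2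
  down_closed _ hτ _ hρτ hρ := ⟨hτ.1, hρτ.trans hτ.2.1, hρ⟩

theorem closedSimplex_isCategoricalIn {K : SComplex V} (hK : K.vertices.Nonempty)
    (σ : Finset V) : (K.closedSimplex σ).IsCategoricalIn K := by
  have hsub : (K.closedSimplex σ).faces ⊆ K.faces := fun τ hτ =>
    K.down_closed σ hτ.1 τ hτ.2.1 hτ.2.2
  obtain ⟨v, hv, hvσ⟩ : ∃ v ∈ K.vertices, σ ∈ K.faces → v ∈ σ := by
    by_cases hσ : σ ∈ K.faces
    · obtain ⟨v, hv⟩ := K.nonempty_of_mem σ hσ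
      exact ⟨v, K.down_closed σ hσ {v} (by simpa using hv) (Finset.singleton_nonempty v),
        fun _ => hv⟩
    · obtain ⟨v, hv⟩ := hK
      exact ⟨v, hv, fun h => absurd h hσ⟩
  refine ⟨hsub, v, hv, Relation.ReflTransGen.single ⟨fun τ hτ => ?_, fun τ hτ => ?_,
    fun τ hτ => ?_⟩⟩
  · simpa using hsub hτ
  · rw [Finset.image_const hτ.2.2]
    exact hv
  · rw [Finset.image_const hτ.2.2, Finset.image_id]
    exact K.down_closed σ hτ.1 _
      (Finset.union_subset hτ.2.1 (by simpa using hvσ hτ.1)) (hτ.2.2.mono Finset.subset_union_left)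

/-- A complex with a vertex has a finite cover by categorical subcomplexes. -/
theorem exists_categorical_cover [Fintype V] {K : SComplex V} (hK : K.vertices.Nonempty) :
    ∃ (m : ℕ) (U : Fin (m + 1) → SComplex V),
      (∀ i, (U i).IsCategoricalIn K) ∧ ∀ σ ∈ K.faces, ∃ i, σ ∈ (U i).faces := by
  have hcard : Fintype.card (Finset V) = Fintype.card (Finset V) - 1 + 1 :=
    (Nat.sub_add_cancel Fintype.card_pos).symm
  let e := Fintype.equivFinOfCardEq hcard
  refine ⟨_, fun i => K.closedSimplex (e.symm i),
    fun i => closedSimplex_isCategoricalIn hK _, fun σ hσ => ⟨e σ, ?_⟩⟩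
  simp only [e.symm_apply_apply]
  exact ⟨hσ, subset_rfl, K.nonempty_of_mem σ hσ⟩

/-- A complex with a vertex and with vanishing category is categorical in itself. -/
theorem isCategoricalIn_self_of_scat_eq_zero [Fintype V] {K : SComplex V}
    (hK : K.vertices.Nonempty) (h : scat K = 0) : K.IsCategoricalIn K := by
  rcases Nat.sInf_eq_zero.1 h with ⟨U, hU, hcover⟩ | hempty
  · obtain ⟨-, v, hv, hclass⟩ := hU 0
    have hle : K.faces ⊆ (U 0).faces := fun σ hσ => by
      obtain ⟨i, hi⟩ := hcover σ hσ
      rwa [show i = 0 from Fin.fin_one_eq_zero i] at hi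
    refine ⟨subset_rfl, v, hv, Relation.ReflTransGen.mono (fun φ ψ hc => ?_) _ _ hclass⟩
    exact ⟨fun σ hσ => hc.1 σ (hle hσ), fun σ hσ => hc.2.1 σ (hle hσ),
      fun σ hσ => hc.2.2 σ (hle hσ)⟩
  · obtain ⟨m, hm⟩ := exists_categorical_cover hK
    exact absurd hm (Set.eq_empty_iff_forall_notMem.1 hempty m)

end SComplex

open SComplex in
/-- If a finite abstract simplicial complex `K` has more than one vertex and no vertex of
`K` is dominated by another vertex, then `scat K ≥ 1`, i.e. `K` itself is not a
categorical subcomplex of `K`. -/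
theorem scat_pos_of_no_dominated_vertex {V : Type*} [DecidableEq V] [Fintype V]
    (K : SComplex V) (hK : 1 < K.vertices.ncard)
    (hd : ∀ v v' : V, ¬ K.IsDominated v v') :
    1 ≤ scat K ∧ ¬ K.IsCategoricalIn K := by
  have hnot := not_isCategoricalIn_self hK hd
  have hne : K.vertices.Nonempty := Set.nonempty_of_ncard_ne_zero (by omega)
  exact ⟨Nat.one_le_iff_ne_zero.2 fun h => hnot (isCategoricalIn_self_of_scat_eq_zero hne h), hnot⟩
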